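/- For every sound θ, the relation 'being on the same side of θ' is an equivalence relation on the set {x : ¬(x ∼ θ)}: it is reflexive, symmetric, and transitive there. -/

import Mathlib

/-- `x` is identical-pitched with `y`: neither is lower-pitched than the other. -/
def Ident {S : Type*} (L : S → S → Prop) (x y : S) : Prop := ¬ L x y ∧ ¬ L y x

/-- `x` is between-pitched `p` and `q`. -/
def Between {S : Type*} (L : S → S → Prop) (x p q : S) : Prop :=
  (L p x ∧ L x q) ∨ (L q x ∧ L x p)

/-- `x` and `y` are on the same side of `θ`. -/
def SameSide {S : Type*} (L : S → S → Prop) (θ x y : S) : Prop :=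
  Ident L x y ∨ ¬ Between L θ x y

/-! For a transitive relation, being on the same side of `θ` is the negation of `θ` lying between.
Transitivity of the former is then a splitting property of the latter: a sound comparable with `θ`
lies below or above it, so if `θ` separates `x` from `z`, it separates that sound from one of them.
-/

section

variable {S : Type*} {L : S → S → Prop} {θ x y z : S}

theorem Ident.refl [Std.Irrefl L] (x : S) : Ident L x x :=
  ⟨irrefl x, irrefl x⟩

theorem Ident.symm (h : Ident L x y) : Ident L y x :=
  And.symm h

theorem not_ident_iff : ¬ Ident L x y ↔ L x y ∨ L y x := by
  rw [Ident, not_and_or, not_not, not_not]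

theorem Between.symm (h : Between L θ x y) : Between L θ y x :=
  Or.symm h

theorem Between.not_ident [IsTrans S L] (h : Between L θ x y) : ¬ Ident L x y :=
  not_ident_iff.mpr <| h.imp (fun ⟨hxθ, hθy⟩ => _root_.trans hxθ hθy)
    (fun ⟨hyθ, hθx⟩ => _root_.trans hyθ hθx)

theorem Between.left_or_right (h : Between L θ x z) (hy : ¬ Ident L y θ) :
    Between L θ x y ∨ Between L θ y z := by
  rcases not_ident_iff.mp hy with hyθ | hθy
  · rcases h with ⟨-, hθz⟩ | ⟨-, hθx⟩
    · exact .inr (.inl ⟨hyθ, hθz⟩)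
    · exact .inl (.inr ⟨hyθ, hθx⟩)
  · rcases h with ⟨hxθ, -⟩ | ⟨hzθ, -⟩
    · exact .inl (.inl ⟨hxθ, hθy⟩)
    · exact .inr (.inr ⟨hzθ, hθy⟩)

theorem sameSide_iff_not_between [IsTrans S L] : SameSide L θ x y ↔ ¬ Between L θ x y :=
  or_iff_right_of_imp fun hxy hθ => hθ.not_ident hxy

theorem SameSide.refl [Std.Irrefl L] (θ x : S) : SameSide L θ x x :=
  .inl (Ident.refl x)

theorem SameSide.symm (h : SameSide L θ x y) : SameSide L θ y x :=
  h.imp Ident.symm fun hθ hθ' => hθ hθ'.symm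

theorem SameSide.trans [IsTrans S L] (hy : ¬ Ident L y θ)
    (hxy : SameSide L θ x y) (hyz : SameSide L θ y z) : SameSide L θ x z := by
  rw [sameSide_iff_not_between] at hxy hyz ⊢
  exact fun hxz => (hxz.left_or_right hy).elim hxy hyz

end

theorem stmt_1_general {S : Type*} (L : S → S → Prop) [IsStrictOrder S L] (θ : S) :
    Equivalence fun x y : {x : S // ¬ Ident L x θ} => SameSide L θ x y where
  refl x := SameSide.refl θ x.1
  symm := SameSide.symm
  trans {_ y _} := SameSide.trans y.2

theorem stmt_1 {S : Type*} (L : S → S → Prop)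
    (A1 : ∀ x : S, ¬ L x x)
    (A2 : ∀ x y z : S, L x y → L y z → L x z)
    (A3 : ∃ x y : S, L x y)
    (A4 : ∀ x y z : S, L x y → ¬ (Ident L x z ∧ Ident L y z))
    (A5a : ∀ x : S, ∃ a b : S, L a x ∧ L x b)
    (A5b : ∀ x y : S, L x y → ∃ a : S, L x a ∧ L a y)
    (θ : S) :
    (∀ x : S, ¬ Ident L x θ → SameSide L θ x x) ∧
    (∀ x y : S, ¬ Ident L x θ → ¬ Ident L y θ →
      SameSide L θ x y → SameSide L θ y x) ∧
    (∀ x y z : S, ¬ Ident L x θ → ¬ Ident L y θ → ¬ Ident L z θ →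
      SameSide L θ x y → SameSide L θ y z → SameSide L θ x z) := by
  have : IsStrictOrder S L := { irrefl := A1, trans := A2 }
  have hEquiv := stmt_1_general L θ
  exact ⟨fun x hx => hEquiv.refl ⟨x, hx⟩,
    fun x y hx hy => hEquiv.symm (x := ⟨x, hx⟩) (y := ⟨y, hy⟩),
    fun x y z hx hy hz => hEquiv.trans (x := ⟨x, hx⟩) (y := ⟨y, hy⟩) (z := ⟨z, hz⟩)⟩
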